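/- Consider a zero-sum game given by a payoff matrix R ∈ ℝ^{n×n} with all entries in (0,1] that possesses a unique Nash equilibrium (x*,y*). Then there exists η₀ ∈ (0,1) such that for every learning rate η ∈ (0,η₀) there exists ξ₀ ∈ (0, 1/η) such that for every ξ ∈ [ξ₀, 1/η) (so that ηξ < 1), the FLBR-MWU iterates (x^t,y^t), started from the profile in which both players play the uniform distribution (1/n,…,1/n), converge to the Nash equilibrium: lim_{t→∞} (x^t,y^t) = (x*,y*). -/

import Mathlib

open Finset Real Filter

/-- A probability vector (mixed strategy) on `Fin n`. -/
def IsProbVec {n : ℕ} (x : Fin n → ℝ) : Prop := (∀ i, 0 ≤ x i) ∧ ∑ i, x i = 1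

/-- A fully mixed strategy: all coordinates strictly positive. -/
def FullyMixed {n : ℕ} (x : Fin n → ℝ) : Prop := ∀ i, 0 < x i

/-- Expected payoff of the row player, `xᵀ R y`. -/
def payoff {n : ℕ} (R : Matrix (Fin n) (Fin n) ℝ) (x y : Fin n → ℝ) : ℝ :=
  ∑ i, ∑ j, x i * R i j * y j

/-- `e_iᵀ R y`, the payoff of pure row strategy `i` against `y`. -/
def rowPayoff {n : ℕ} (R : Matrix (Fin n) (Fin n) ℝ) (y : Fin n → ℝ) (i : Fin n) : ℝ :=
  ∑ j, R i j * y j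

/-- `xᵀ R e_j`, the (row player's) payoff when the column player plays pure strategy `j`. -/
def colPayoff {n : ℕ} (R : Matrix (Fin n) (Fin n) ℝ) (x : Fin n → ℝ) (j : Fin n) : ℝ :=
  ∑ i, x i * R i j

/-- `(x, y)` is a Nash equilibrium of the zero-sum game with payoff matrix `R`. -/
def IsNash {n : ℕ} (R : Matrix (Fin n) (Fin n) ℝ) (x y : Fin n → ℝ) : Prop :=
  IsProbVec x ∧ IsProbVec y ∧ (∀ i, rowPayoff R y i ≤ payoff R x y) ∧
    (∀ j, payoff R x y ≤ colPayoff R x j)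

/-- `(x, y)` is an `ε`-Nash equilibrium. -/
def IsEpsNash {n : ℕ} (R : Matrix (Fin n) (Fin n) ℝ) (x y : Fin n → ℝ) (ε : ℝ) : Prop :=
  (∀ i, rowPayoff R y i ≤ payoff R x y + ε) ∧ (∀ j, payoff R x y - ε ≤ colPayoff R x j)

/-- Intermediate (IBR) strategy of the row player:
`x̂ᵢ = xᵢ e^{ξ (Ry)ᵢ} / ∑ⱼ xⱼ e^{ξ (Ry)ⱼ}`. -/
noncomputable def brX {n : ℕ} (ξ : ℝ) (R : Matrix (Fin n) (Fin n) ℝ) (x y : Fin n → ℝ) :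
    Fin n → ℝ :=
  fun i => x i * Real.exp (ξ * rowPayoff R y i) / ∑ j, x j * Real.exp (ξ * rowPayoff R y j)

/-- Intermediate (IBR) strategy of the column player:
`ŷⱼ = yⱼ e^{-ξ (Rᵀx)ⱼ} / ∑ₖ yₖ e^{-ξ (Rᵀx)ₖ}`. -/
noncomputable def brY {n : ℕ} (ξ : ℝ) (R : Matrix (Fin n) (Fin n) ℝ) (x y : Fin n → ℝ) :
    Fin n → ℝ :=
  fun j => y j * Real.exp (-(ξ * colPayoff R x j)) / ∑ k, y k * Real.exp (-(ξ * colPayoff R x k))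

/-- Multiplicative-weights update of the row player against the (intermediate) strategy `yh`. -/
noncomputable def mwuX {n : ℕ} (η : ℝ) (R : Matrix (Fin n) (Fin n) ℝ) (x yh : Fin n → ℝ) :
    Fin n → ℝ :=
  fun i => x i * Real.exp (η * rowPayoff R yh i) / ∑ j, x j * Real.exp (η * rowPayoff R yh j)

/-- Multiplicative-weights update of the column player against the (intermediate) strategy `xh`. -/
noncomputable def mwuY {n : ℕ} (η : ℝ) (R : Matrix (Fin n) (Fin n) ℝ) (y xh : Fin n → ℝ) :
    Fin n → ℝ :=
  fun j => y j * Real.exp (-(η * colPayoff R xh j)) / ∑ k, y k * Real.exp (-(η * colPayoff R xh k))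

/-- One full step of the FLBR-MWU dynamics with update rate `η` and intermediate rate `ξ`. -/
noncomputable def flbrStep {n : ℕ} (η ξ : ℝ) (R : Matrix (Fin n) (Fin n) ℝ)
    (p : (Fin n → ℝ) × (Fin n → ℝ)) : (Fin n → ℝ) × (Fin n → ℝ) :=
  (mwuX η R p.1 (brY ξ R p.1 p.2), mwuY η R p.2 (brX ξ R p.1 p.2))

/-- Kullback–Leibler divergence `∑ᵢ xsᵢ ln(xsᵢ / xᵢ)` (with the convention `0 · ln 0 = 0`). -/
noncomputable def klDiv {n : ℕ} (xs x : Fin n → ℝ) : ℝ := ∑ i, xs i * Real.log (xs i / x i)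

/-- KL divergence of the profile `(x, y)` from `(xs, ys)`. -/
noncomputable def klProfile {n : ℕ} (xs ys x y : Fin n → ℝ) : ℝ := klDiv xs x + klDiv ys y

/-!
Let `F` be the payoff field of the game, `p` the current profile and `q` its lookahead. Since `F` is
skew, the first-order term of the log-partition function at `p` of `η F(q)` is
`-η ⟨F(p), q - p⟩`, and the lookahead is an exponential tilt of `p` along `F(p)`, so that this gain
dominates the second-order terms: each step lowers the potential by at least `η²` times the variance
of the payoffs `F(p)` under `p`. The potentials telescope to the log-partition function at the
initial profile of `η F(S)`, where `S` is the sum of all lookaheads so far. Hence for every pair of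
pure deviations, `η` times its gain at `S` plus `η²` times the sum of the variances stays bounded.

Averaging over the equilibrium `z`, against which no profile gains, shows that the variances are
summable. Moreover the distance to a unique equilibrium is controlled by the gains of the deviations
that are optimal at `z`, because these inequalities are linear; so `S` stays at bounded distance
from the ray through `z`, and the weights of the strategies that are optimal at `z` stay bounded
away from `0`. At a cluster point the variances vanish, so these strategies all earn the average
payoff, and no deviation that is optimal at `z` gains: the cluster point is `z`.
-/

section Simplex

variable {ι : Type*} [Fintype ι] {x u : ι → ℝ}

/-- The fully mixed strategies over a finite type: the relative interior of `stdSimplex ℝ ι`, on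
which exponential tilting acts. -/
def openSimplex (ι : Type*) [Fintype ι] : Set (ι → ℝ) :=
  {x | (∀ i, 0 < x i) ∧ ∑ i, x i = 1}

lemma openSimplex_subset_stdSimplex : openSimplex ι ⊆ stdSimplex ℝ ι :=
  fun _ hx => ⟨fun i => (hx.1 i).le, hx.2⟩

lemma nonempty_of_mem_stdSimplex (hx : x ∈ stdSimplex ℝ ι) : Nonempty ι := by
  by_contra h
  rw [not_nonempty_iff] at h
  simp [stdSimplex_of_isEmpty_index] at hx

lemma dotProduct_const_of_mem_stdSimplex (hx : x ∈ stdSimplex ℝ ι) (c : ℝ) :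
    (x ⬝ᵥ fun _ => c) = c := by
  rw [dotProduct, ← Finset.sum_mul, hx.2, one_mul]

lemma dotProduct_le_of_mem_stdSimplex (hx : x ∈ stdSimplex ℝ ι) {c : ℝ} (hu : ∀ i, u i ≤ c) :
    x ⬝ᵥ u ≤ c :=
  (dotProduct_le_dotProduct_of_nonneg_left hu hx.1).trans_eq
    (dotProduct_const_of_mem_stdSimplex hx c)

lemma abs_sub_dotProduct_le (hx : x ∈ stdSimplex ℝ ι) {c : ℝ} (hu : ∀ i k, u i - u k ≤ c) (i : ι) :
    |u i - x ⬝ᵥ u| ≤ c := by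
  have upper : x ⬝ᵥ u ≤ u i + c :=
    dotProduct_le_of_mem_stdSimplex hx fun k => by linarith [hu k i]
  have lower : x ⬝ᵥ -u ≤ c - u i :=
    dotProduct_le_of_mem_stdSimplex hx fun k => by simp only [Pi.neg_apply]; linarith [hu i k]
  rw [dotProduct_neg] at lower
  exact abs_le.2 ⟨by linarith, by linarith⟩

/-- The variance of `u` when the index is drawn from the probability vector `x`. -/
def weightedVar (x u : ι → ℝ) : ℝ := ∑ i, x i * (u i - x ⬝ᵥ u) ^ 2

lemma weightedVar_nonneg (hx : x ∈ stdSimplex ℝ ι) (u : ι → ℝ) : 0 ≤ weightedVar x u :=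
  Finset.sum_nonneg fun i _ => mul_nonneg (hx.1 i) (sq_nonneg _)

lemma weightedVar_smul (x u : ι → ℝ) (a : ℝ) : weightedVar x (a • u) = a ^ 2 * weightedVar x u := by
  simp only [weightedVar, dotProduct_smul, Pi.smul_apply, smul_eq_mul, Finset.mul_sum]
  exact Finset.sum_congr rfl fun i _ => by ring

lemma sum_mul_sub_dotProduct (hx : x ∈ stdSimplex ℝ ι) (u : ι → ℝ) :
    ∑ i, x i * (u i - x ⬝ᵥ u) = 0 := by
  simp only [mul_sub, Finset.sum_sub_distrib, ← Finset.sum_mul, hx.2, one_mul]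
  exact sub_self _

lemma weightedVar_le_sum_mul_sub_sq (hx : x ∈ stdSimplex ℝ ι) (u : ι → ℝ) (c : ℝ) :
    weightedVar x u ≤ ∑ i, x i * (u i - c) ^ 2 := by
  have split : ∑ i, x i * (u i - c) ^ 2 = weightedVar x u + (x ⬝ᵥ u - c) ^ 2 := by
    calc ∑ i, x i * (u i - c) ^ 2
        = ∑ i, (x i * (u i - x ⬝ᵥ u) ^ 2 + 2 * (x ⬝ᵥ u - c) * (x i * (u i - x ⬝ᵥ u))
            + (x ⬝ᵥ u - c) ^ 2 * x i) := Finset.sum_congr rfl fun i _ => by ring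
      _ = weightedVar x u + (x ⬝ᵥ u - c) ^ 2 := by
        simp only [Finset.sum_add_distrib, ← Finset.mul_sum, sum_mul_sub_dotProduct hx, hx.2,
          weightedVar, mul_zero, mul_one, add_zero]
  rw [split]
  exact le_add_of_nonneg_right (sq_nonneg _)

lemma weightedVar_add_le (hx : x ∈ stdSimplex ℝ ι) (u v : ι → ℝ) :
    weightedVar x (u + v) ≤ 2 * weightedVar x u + 2 * weightedVar x v := by
  simp only [weightedVar, dotProduct_add, Pi.add_apply, Finset.mul_sum, ← Finset.sum_add_distrib]
  refine Finset.sum_le_sum fun i _ => ?_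
  have := mul_le_mul_of_nonneg_left
    (add_sq_le (a := u i - x ⬝ᵥ u) (b := v i - x ⬝ᵥ v)) (hx.1 i)
  calc x i * (u i + v i - (x ⬝ᵥ u + x ⬝ᵥ v)) ^ 2
      = x i * ((u i - x ⬝ᵥ u) + (v i - x ⬝ᵥ v)) ^ 2 := by ring
    _ ≤ x i * (2 * ((u i - x ⬝ᵥ u) ^ 2 + (v i - x ⬝ᵥ v) ^ 2)) := this
    _ = _ := by ring

lemma weightedVar_le_sq_div_four (hx : x ∈ stdSimplex ℝ ι) {δ : ℝ} (hu : ∀ i k, u i - u k ≤ δ) :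
    weightedVar x u ≤ δ ^ 2 / 4 := by
  have := nonempty_of_mem_stdSimplex hx
  obtain ⟨a, ha⟩ := Finite.exists_max u
  obtain ⟨b, hb⟩ := Finite.exists_min u
  refine (weightedVar_le_sum_mul_sub_sq hx u ((u a + u b) / 2)).trans ?_
  refine dotProduct_le_of_mem_stdSimplex hx fun i => ?_
  have : |u i - (u a + u b) / 2| ≤ δ / 2 :=
    abs_le.2 ⟨by linarith [hb i, hu a b], by linarith [ha i, hu a b]⟩
  calc (u i - (u a + u b) / 2) ^ 2 ≤ (δ / 2) ^ 2 := sq_le_sq' (abs_le.1 this).1 (abs_le.1 this).2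
    _ = δ ^ 2 / 4 := by ring

lemma eq_dotProduct_of_weightedVar_eq_zero (hx : x ∈ stdSimplex ℝ ι) (hu : weightedVar x u = 0)
    {i : ι} (hi : 0 < x i) : u i = x ⬝ᵥ u := by
  have := (Finset.sum_eq_zero_iff_of_nonneg fun i _ =>
    mul_nonneg (hx.1 i) (sq_nonneg (u i - x ⬝ᵥ u))).1 hu i (Finset.mem_univ i)
  exact sub_eq_zero.1 (pow_eq_zero_iff two_ne_zero |>.1
    ((mul_eq_zero.1 this).resolve_left hi.ne'))

lemma continuous_weightedVar : Continuous fun p : (ι → ℝ) × (ι → ℝ) => weightedVar p.1 p.2 := by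
  unfold weightedVar dotProduct
  fun_prop

end Simplex

section ExpTilt

variable {ι : Type*} [Fintype ι] {x u : ι → ℝ}

/-- The multiplicative-weights update of the strategy `x` along the payoff vector `u`; the learning
rate is absorbed into `u`. -/
noncomputable def expTilt (x u : ι → ℝ) : ι → ℝ :=
  fun i => x i * exp (u i) / ∑ j, x j * exp (u j)

/-- The log-partition function: the logarithm of the normalising factor of `expTilt x u`. -/
noncomputable def logPartition (x u : ι → ℝ) : ℝ := log (∑ j, x j * exp (u j))

lemma sum_mul_exp_pos (hx : x ∈ openSimplex ι) (u : ι → ℝ) : 0 < ∑ j, x j * exp (u j) :=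
  have := nonempty_of_mem_stdSimplex (openSimplex_subset_stdSimplex hx)
  Finset.sum_pos (fun i _ => mul_pos (hx.1 i) (exp_pos _)) Finset.univ_nonempty

lemma expTilt_mem_openSimplex (hx : x ∈ openSimplex ι) (u : ι → ℝ) :
    expTilt x u ∈ openSimplex ι := by
  refine ⟨fun i => div_pos (mul_pos (hx.1 i) (exp_pos _)) (sum_mul_exp_pos hx u), ?_⟩
  simp only [expTilt]
  rw [← Finset.sum_div, div_self (sum_mul_exp_pos hx u).ne']

lemma expTilt_zero (hx : x ∈ openSimplex ι) : expTilt x 0 = x := by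
  funext i
  simp [expTilt, hx.2]

lemma logPartition_zero (hx : x ∈ openSimplex ι) : logPartition x 0 = 0 := by
  simp [logPartition, hx.2]

lemma expTilt_eq_mul_exp (hx : x ∈ openSimplex ι) (u : ι → ℝ) (i : ι) :
    expTilt x u i = x i * exp (u i - logPartition x u) := by
  rw [expTilt, exp_sub, logPartition, exp_log (sum_mul_exp_pos hx u), mul_div_assoc]

lemma log_expTilt_sub_log (hx : x ∈ openSimplex ι) (u : ι → ℝ) (i : ι) :
    log (expTilt x u i) - log (x i) = u i - logPartition x u := by
  rw [expTilt_eq_mul_exp hx, log_mul (hx.1 i).ne' (exp_pos _).ne', log_exp, add_sub_cancel_left]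

lemma sum_expTilt_mul_exp (x u v : ι → ℝ) :
    ∑ j, expTilt x u j * exp (v j)
      = (∑ j, x j * exp ((u + v) j)) / ∑ j, x j * exp (u j) := by
  simp only [expTilt, Finset.sum_div, Pi.add_apply, exp_add]
  exact Finset.sum_congr rfl fun j _ => by ring

lemma expTilt_add (hx : x ∈ openSimplex ι) (u v : ι → ℝ) :
    expTilt x (u + v) = expTilt (expTilt x u) v := by
  funext i
  rw [expTilt, expTilt, sum_expTilt_mul_exp, expTilt, Pi.add_apply, exp_add]
  field_simp [(sum_mul_exp_pos hx u).ne', (sum_mul_exp_pos hx (u + v)).ne']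

lemma logPartition_add (hx : x ∈ openSimplex ι) (u v : ι → ℝ) :
    logPartition x (u + v) = logPartition x u + logPartition (expTilt x u) v := by
  rw [logPartition, logPartition, logPartition, sum_expTilt_mul_exp,
    log_div (sum_mul_exp_pos hx _).ne' (sum_mul_exp_pos hx u).ne', add_sub_cancel]

lemma log_add_le_logPartition (hx : x ∈ openSimplex ι) (u : ι → ℝ) (i : ι) :
    log (x i) + u i ≤ logPartition x u := by
  have := log_nonpos (expTilt_mem_openSimplex hx u |>.1 i).le
    (mem_Icc_of_mem_stdSimplex (openSimplex_subset_stdSimplex (expTilt_mem_openSimplex hx u)) i).2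
  linarith [log_expTilt_sub_log hx u i]

lemma logPartition_le_of_forall_le (hx : x ∈ openSimplex ι) {c : ℝ} (hu : ∀ i, u i ≤ c) :
    logPartition x u ≤ c := by
  refine (log_le_iff_le_exp (sum_mul_exp_pos hx u)).2 ?_
  exact dotProduct_le_of_mem_stdSimplex (openSimplex_subset_stdSimplex hx)
    fun i => exp_le_exp.2 (hu i)

lemma mul_exp_neg_le_expTilt (hx : x ∈ openSimplex ι) {c : ℝ} {i : ι}
    (hu : ∀ k, u k ≤ u i + c) : x i * exp (-c) ≤ expTilt x u i := by
  rw [expTilt_eq_mul_exp hx]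
  refine mul_le_mul_of_nonneg_left (exp_le_exp.2 ?_) (hx.1 i).le
  linarith [logPartition_le_of_forall_le hx hu]

lemma mul_exp_neg_le_expTilt_smul_add (hx : x ∈ openSimplex ι) {v w : ι → ℝ} {T B : ℝ}
    (hT : 0 ≤ T) (hw : ‖w‖ ≤ B) {i : ι} (hv : ∀ k, v k ≤ v i) :
    x i * exp (-(2 * B)) ≤ expTilt x (T • v + w) i := by
  refine mul_exp_neg_le_expTilt hx fun k => ?_
  have hwB : ∀ j, |w j| ≤ B := fun j => (norm_le_pi_norm w j).trans hw
  simp only [Pi.add_apply, Pi.smul_apply, smul_eq_mul]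
  linarith [mul_le_mul_of_nonneg_left (hv k) hT, (abs_le.1 (hwB i)).1, (abs_le.1 (hwB k)).2]

lemma logPartition_le_dotProduct_add_weightedVar (hx : x ∈ openSimplex ι)
    (hu : ∀ i k, u i - u k ≤ 1) : logPartition x u ≤ x ⬝ᵥ u + weightedVar x u := by
  have hx' := openSimplex_subset_stdSimplex hx
  have shift : ∑ j, x j * exp (u j) = exp (x ⬝ᵥ u) * ∑ j, x j * exp (u j - x ⬝ᵥ u) := by
    rw [Finset.mul_sum]
    refine Finset.sum_congr rfl fun j _ => ?_
    rw [mul_left_comm, ← exp_add, add_sub_cancel]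
  have second_order : ∑ j, x j * exp (u j - x ⬝ᵥ u) ≤ 1 + weightedVar x u := by
    calc ∑ j, x j * exp (u j - x ⬝ᵥ u)
        ≤ ∑ j, x j * (1 + (u j - x ⬝ᵥ u) + (u j - x ⬝ᵥ u) ^ 2) := by
          refine Finset.sum_le_sum fun j _ => mul_le_mul_of_nonneg_left ?_ (hx.1 j).le
          have := (abs_le.1 (abs_exp_sub_one_sub_id_le (abs_sub_dotProduct_le hx' hu j))).2
          linarith
      _ = 1 + weightedVar x u := by
          simp only [mul_add, mul_one, Finset.sum_add_distrib, hx.2, sum_mul_sub_dotProduct hx',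
            add_zero, weightedVar]
  rw [logPartition, log_le_iff_le_exp (sum_mul_exp_pos hx u), shift, exp_add]
  refine mul_le_mul_of_nonneg_left (second_order.trans ?_) (exp_pos _).le
  linarith [add_one_le_exp (weightedVar x u)]

lemma dotProduct_expTilt_sub (hx : x ∈ openSimplex ι) (u : ι → ℝ) :
    u ⬝ᵥ (expTilt x u - x)
      = ∑ i, (expTilt x u i - x i) * (log (expTilt x u i) - log (x i)) := by
  simp only [log_expTilt_sub_log hx, mul_sub, Finset.sum_sub_distrib, ← Finset.sum_mul,
    (expTilt_mem_openSimplex hx u).2, hx.2, sub_self, zero_mul, sub_zero, dotProduct_comm u]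
  rfl

lemma two_mul_sq_sub_div_add_le {a b : ℝ} (ha : 0 < a) (hb : 0 < b) :
    2 * ((a - b) ^ 2 / (a + b)) ≤ (a - b) * (log a - log b) := by
  wlog hba : b ≤ a generalizing a b
  · calc 2 * ((a - b) ^ 2 / (a + b)) = 2 * ((b - a) ^ 2 / (b + a)) := by ring
      _ ≤ (b - a) * (log b - log a) := this hb ha (le_of_not_ge hba)
      _ = (a - b) * (log a - log b) := by ring
  have log_bound : 2 * ((a - b) / (a + b)) ≤ log a - log b := by
    have := le_log_one_add_of_nonneg (div_nonneg (sub_nonneg.2 hba) hb.le)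
    rw [show 1 + (a - b) / b = a / b by field_simp; ring, log_div ha.ne' hb.ne'] at this
    rwa [show (a - b) / b + 2 = (a + b) / b by field_simp; ring, mul_div_assoc,
      div_div_div_cancel_right₀ hb.ne'] at this
  calc 2 * ((a - b) ^ 2 / (a + b)) = (a - b) * (2 * ((a - b) / (a + b))) := by ring
    _ ≤ (a - b) * (log a - log b) := mul_le_mul_of_nonneg_left log_bound (sub_nonneg.2 hba)

lemma sq_sum_abs_sub_le_sum_mul_log_sub_log {p q : ι → ℝ} (hp : p ∈ openSimplex ι)
    (hq : q ∈ openSimplex ι) :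
    (∑ i, |p i - q i|) ^ 2 ≤ ∑ i, (p i - q i) * (log (p i) - log (q i)) := by
  have titu := Finset.sq_sum_div_le_sum_sq_div Finset.univ (fun i => |p i - q i|)
    (g := fun i => p i + q i) fun i _ => add_pos (hp.1 i) (hq.1 i)
  simp only [Finset.sum_add_distrib, hp.2, hq.2, sq_abs] at titu
  calc (∑ i, |p i - q i|) ^ 2 ≤ 2 * ∑ i, (p i - q i) ^ 2 / (p i + q i) := by linarith
    _ ≤ ∑ i, (p i - q i) * (log (p i) - log (q i)) := by
      rw [Finset.mul_sum]
      exact Finset.sum_le_sum fun i _ => two_mul_sq_sub_div_add_le (hp.1 i) (hq.1 i)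

lemma sq_sum_abs_expTilt_sub_le (hx : x ∈ openSimplex ι) (u : ι → ℝ) :
    (∑ i, |expTilt x u i - x i|) ^ 2 ≤ u ⬝ᵥ (expTilt x u - x) :=
  (dotProduct_expTilt_sub hx u).symm ▸
    sq_sum_abs_sub_le_sum_mul_log_sub_log (expTilt_mem_openSimplex hx u) hx

lemma sq_half_le_exp_sub_one_mul {s : ℝ} (hs : -1 ≤ s) : s ^ 2 / 2 ≤ (exp s - 1) * s := by
  rcases le_total 0 s with h | h
  · nlinarith [add_one_le_exp s]
  · have inv_bound : exp s * (1 - s) ≤ 1 := by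
      calc exp s * (1 - s) ≤ exp s * exp (-s) :=
            mul_le_mul_of_nonneg_left (by linarith [add_one_le_exp (-s)]) (exp_pos s).le
        _ = 1 := by rw [← exp_add, add_neg_cancel, exp_zero]
    have : exp s ≤ 1 + s / 2 := by nlinarith
    nlinarith

lemma weightedVar_le_two_mul_dotProduct_expTilt_sub (hx : x ∈ openSimplex ι)
    (hu : ∀ i k, u i - u k ≤ 1) : weightedVar x u ≤ 2 * (u ⬝ᵥ (expTilt x u - x)) := by
  set Λ := logPartition x u
  have hs : ∀ i, -1 ≤ u i - Λ := fun i => by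
    have : Λ ≤ u i + 1 := logPartition_le_of_forall_le hx fun k => by linarith [hu k i]
    linarith
  calc weightedVar x u ≤ ∑ i, x i * (u i - Λ) ^ 2 :=
        weightedVar_le_sum_mul_sub_sq (openSimplex_subset_stdSimplex hx) u Λ
    _ ≤ ∑ i, 2 * (x i * ((exp (u i - Λ) - 1) * (u i - Λ))) := Finset.sum_le_sum fun i _ => by
        linarith [mul_le_mul_of_nonneg_left (sq_half_le_exp_sub_one_mul (hs i)) (hx.1 i).le]
    _ = 2 * (u ⬝ᵥ (expTilt x u - x)) := by
        rw [dotProduct_expTilt_sub hx, Finset.mul_sum]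
        refine Finset.sum_congr rfl fun i _ => ?_
        rw [log_expTilt_sub_log hx, expTilt_eq_mul_exp hx]
        ring

lemma dotProduct_expTilt_sub_nonneg (hx : x ∈ openSimplex ι) (u : ι → ℝ) :
    0 ≤ u ⬝ᵥ (expTilt x u - x) :=
  (sq_nonneg _).trans (sq_sum_abs_expTilt_sub_le hx u)

lemma dotProduct_expTilt_le_dotProduct_expTilt_smul (hx : x ∈ openSimplex ι) (u : ι → ℝ) {ξ : ℝ}
    (hξ : 1 ≤ ξ) : u ⬝ᵥ expTilt x u ≤ u ⬝ᵥ expTilt x (ξ • u) := by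
  rcases hξ.eq_or_lt with rfl | hξ
  · rw [one_smul]
  · have gain := dotProduct_expTilt_sub_nonneg (expTilt_mem_openSimplex hx u) ((ξ - 1) • u)
    rw [← expTilt_add hx, show u + (ξ - 1) • u = ξ • u by module, smul_dotProduct, smul_eq_mul,
      mul_nonneg_iff_of_pos_left (sub_pos.2 hξ), dotProduct_sub] at gain
    exact sub_nonneg.1 gain

lemma sq_mul_three_mul_weightedVar_add_le (hx : x ∈ openSimplex ι) (hu : ∀ i k, u i - u k ≤ 1)
    {η ξ : ℝ} (hη : 0 < η) (hη' : η ≤ 1 / 12) (hξ : 1 ≤ ξ) (hηξ : η * ξ ≤ 1) :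
    η ^ 2 * (3 * weightedVar x u + (∑ i, |expTilt x (ξ • u) i - x i|) ^ 2 / 2)
      ≤ η * (u ⬝ᵥ (expTilt x (ξ • u) - x)) := by
  set A := u ⬝ᵥ (expTilt x (ξ • u) - x) with hA
  have var_le : weightedVar x u ≤ 2 * A := by
    have := dotProduct_expTilt_le_dotProduct_expTilt_smul hx u hξ
    have := weightedVar_le_two_mul_dotProduct_expTilt_sub hx hu
    rw [dotProduct_sub] at this
    rw [hA, dotProduct_sub]
    linarith
  have dist_le : (∑ i, |expTilt x (ξ • u) i - x i|) ^ 2 ≤ ξ * A := by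
    exact (sq_sum_abs_expTilt_sub_le hx (ξ • u)).trans_eq (smul_dotProduct ξ u _)
  have hA0 : 0 ≤ η * A := by
    have := weightedVar_nonneg (openSimplex_subset_stdSimplex hx) u
    exact mul_nonneg hη.le (by linarith)
  calc η ^ 2 * (3 * weightedVar x u + (∑ i, |expTilt x (ξ • u) i - x i|) ^ 2 / 2)
      ≤ η ^ 2 * (3 * (2 * A) + ξ * A / 2) := by gcongr
    _ = (6 * η + η * ξ / 2) * (η * A) := by ring
    _ ≤ 1 * (η * A) := mul_le_mul_of_nonneg_right (by linarith) hA0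
    _ = η * A := one_mul _

end ExpTilt

section ErrorBound

variable {E α : Type*} [NormedAddCommGroup E] [NormedSpace ℝ E] [FiniteDimensional ℝ E] [Finite α]

-- By compactness of the unit sphere of `K`, the worst violation of the inequalities `ℓ a p ≤ 0`
-- is bounded below there; it is positively homogeneous.
lemma exists_norm_le_mul_of_forall_le (K : PointedCone ℝ E) (hK : IsClosed (K : Set E))
    (ℓ : α → E →ₗ[ℝ] ℝ) (hℓ : ∀ p ∈ K, (∀ a, ℓ a p ≤ 0) → p = 0) :
    ∃ C, ∀ p ∈ K, ∀ ε, 0 ≤ ε → (∀ a, ℓ a p ≤ ε) → ‖p‖ ≤ C * ε := by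
  have := Fintype.ofFinite α
  set f : E → ℝ := fun p => ∑ a, max (ℓ a p) 0
  have hf : Continuous f := continuous_finsetSum _ fun a _ =>
    (ℓ a).continuous_of_finiteDimensional.max continuous_const
  have f_pos : ∀ p ∈ (K : Set E) ∩ Metric.sphere 0 1, 0 < f p := by
    rintro p ⟨hpK, hp⟩
    by_contra hle
    have : ∀ a, max (ℓ a p) 0 = 0 := fun a =>
      (Finset.sum_eq_zero_iff_of_nonneg fun _ _ => le_max_right _ _).1
        (le_antisymm (not_lt.1 hle) (Finset.sum_nonneg fun _ _ => le_max_right _ _)) a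
        (Finset.mem_univ a)
    have := hℓ p hpK fun a => max_eq_right_iff.1 (this a)
    simp [this] at hp
  obtain ⟨m, hm, hmf⟩ :=
    ((isCompact_sphere (0 : E) 1).inter_left hK).exists_forall_le' hf.continuousOn f_pos
  refine ⟨Fintype.card α / m, fun p hpK ε hε hp => ?_⟩
  rcases eq_or_ne p 0 with rfl | hp0
  · simpa using by positivity
  have norm_pos : 0 < ‖p‖ := norm_pos_iff.2 hp0
  have lower : m ≤ f (‖p‖⁻¹ • p) :=
    hmf _ ⟨K.smul_mem (by positivity) hpK, by simp [norm_smul, norm_pos.ne']⟩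
  have upper : f (‖p‖⁻¹ • p) ≤ Fintype.card α * (‖p‖⁻¹ * ε) := by
    refine (Finset.sum_le_card_nsmul _ _ (‖p‖⁻¹ * ε) fun a _ => max_le ?_ (by positivity)).trans_eq
      (nsmul_eq_mul _ _)
    rw [map_smul, smul_eq_mul]
    exact mul_le_mul_of_nonneg_left (hp a) (by positivity)
  rw [div_mul_eq_mul_div, le_div_iff₀ hm]
  calc ‖p‖ * m ≤ ‖p‖ * (Fintype.card α * (‖p‖⁻¹ * ε)) := by gcongr; exact lower.trans upper
    _ = Fintype.card α * ε := by field_simp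

end ErrorBound

section TangentCone

variable {ι : Type*} [Fintype ι] {x y d : ι → ℝ}

/-- The cone of feasible directions of `stdSimplex ℝ ι` at a point `x` of it. -/
def simplexTangentCone (x : ι → ℝ) : PointedCone ℝ (ι → ℝ) where
  carrier := {d | (∀ i, x i = 0 → 0 ≤ d i) ∧ ∑ i, d i = 0}
  add_mem' hd he :=
    ⟨fun i hi => add_nonneg (hd.1 i hi) (he.1 i hi), by
      simp [Finset.sum_add_distrib, hd.2, he.2]⟩
  zero_mem' := by simp
  smul_mem' c d hd :=
    ⟨fun i hi => mul_nonneg c.2 (hd.1 i hi), by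
      simpa [← Finset.smul_sum] using Or.inr hd.2⟩

lemma isClosed_simplexTangentCone (x : ι → ℝ) :
    IsClosed (simplexTangentCone x : Set (ι → ℝ)) := by
  have : (simplexTangentCone x : Set (ι → ℝ))
      = (⋂ i, ⋂ (_ : x i = 0), {d | 0 ≤ d i}) ∩ {d | ∑ i, d i = 0} := by
    ext d
    simp [simplexTangentCone]
  rw [this]
  exact (isClosed_iInter fun i => isClosed_iInter fun _ =>
    isClosed_le continuous_const (continuous_apply i)).inter
      (isClosed_eq (by fun_prop) continuous_const)

lemma sub_mem_simplexTangentCone (hx : x ∈ stdSimplex ℝ ι) (hy : y ∈ stdSimplex ℝ ι) :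
    y - x ∈ simplexTangentCone x :=
  ⟨fun i hi => by simpa [hi] using hy.1 i, by simp [hx.2, hy.2]⟩

lemma eventually_nonneg_add_mul {a b : ℝ} (ha : 0 ≤ a) (hb : a = 0 → 0 ≤ b) :
    ∀ᶠ ε in nhdsWithin (0 : ℝ) (Set.Ioi 0), 0 ≤ a + ε * b := by
  rcases ha.eq_or_lt with rfl | ha
  · filter_upwards [self_mem_nhdsWithin] with ε hε
    simpa using mul_nonneg (le_of_lt hε) (hb rfl)
  · have : Tendsto (fun ε : ℝ => a + ε * b) (nhdsWithin 0 (Set.Ioi 0)) (nhds (a + 0 * b)) :=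
      ((continuous_const.add (continuous_id.mul continuous_const)).tendsto 0).mono_left
        nhdsWithin_le_nhds
    filter_upwards [this.eventually_const_lt (by simpa using ha)] with ε hε using hε.le

lemma eventually_add_smul_mem_stdSimplex (hx : x ∈ stdSimplex ℝ ι)
    (hd : d ∈ simplexTangentCone x) :
    ∀ᶠ ε in nhdsWithin (0 : ℝ) (Set.Ioi 0), x + ε • d ∈ stdSimplex ℝ ι := by
  have nonneg : ∀ᶠ ε in nhdsWithin (0 : ℝ) (Set.Ioi 0), ∀ i, 0 ≤ x i + ε * d i :=
    eventually_all.2 fun i => eventually_nonneg_add_mul (hx.1 i) (hd.1 i)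
  filter_upwards [nonneg] with ε hε
  exact ⟨hε, by simp [Finset.sum_add_distrib, ← Finset.mul_sum, hx.2, hd.2]⟩

end TangentCone

section MulVec

open Matrix

variable {ι κ : Type*} [Fintype κ] {R : Matrix ι κ ℝ}

lemma mulVec_sub_mulVec_le {c : ℝ} (hR : ∀ i k j, R i j - R k j ≤ c) (d : κ → ℝ) (i k : ι) :
    (R *ᵥ d) i - (R *ᵥ d) k ≤ c * ∑ j, |d j| := by
  simp only [mulVec, dotProduct, ← Finset.sum_sub_distrib, ← sub_mul, Finset.mul_sum]
  refine Finset.sum_le_sum fun j _ => (le_abs_self _).trans ?_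
  rw [abs_mul]
  exact mul_le_mul_of_nonneg_right (abs_le.2 ⟨by linarith [hR k i j], hR i k j⟩) (abs_nonneg _)

lemma mulVec_sub_mulVec_le_of_mem_stdSimplex {c : ℝ} (hR : ∀ i k j, R i j - R k j ≤ c) {y : κ → ℝ}
    (hy : y ∈ stdSimplex ℝ κ) (i k : ι) : (R *ᵥ y) i - (R *ᵥ y) k ≤ c := by
  simpa [abs_of_nonneg (hy.1 _), hy.2] using mulVec_sub_mulVec_le hR y i k

lemma logPartition_smul_mulVec_le [Fintype ι] (hR : ∀ i k j, R i j - R k j ≤ 1) {x : ι → ℝ}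
    {z : κ → ℝ} (hx : x ∈ openSimplex ι) (hz : z ∈ stdSimplex ℝ κ) (y : κ → ℝ) {η : ℝ}
    (hη : 0 ≤ η) (hη' : η ≤ 1) :
    logPartition x (η • R *ᵥ z) ≤ η * (x ⬝ᵥ R *ᵥ z)
      + η ^ 2 * (2 * weightedVar x (R *ᵥ y) + (∑ j, |z j - y j|) ^ 2 / 2) := by
  have hx' := openSimplex_subset_stdSimplex hx
  have osc : ∀ i k, (η • R *ᵥ z) i - (η • R *ᵥ z) k ≤ 1 := fun i k => by
    rw [Pi.smul_apply, Pi.smul_apply, ← smul_sub]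
    exact (mul_le_mul_of_nonneg_left (mulVec_sub_mulVec_le_of_mem_stdSimplex hR hz i k) hη).trans
      (by linarith)
  have var_le : weightedVar x (R *ᵥ z)
      ≤ 2 * weightedVar x (R *ᵥ y) + (∑ j, |z j - y j|) ^ 2 / 2 := by
    have split := weightedVar_add_le hx' (R *ᵥ y) (R *ᵥ (z - y))
    have popoviciu := weightedVar_le_sq_div_four hx' (mulVec_sub_mulVec_le hR (z - y))
    rw [← mulVec_add, add_sub_cancel] at split
    simp only [one_mul, Pi.sub_apply] at popoviciu
    linarith
  calc logPartition x (η • R *ᵥ z)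
      ≤ η * (x ⬝ᵥ R *ᵥ z) + η ^ 2 * weightedVar x (R *ᵥ z) := by
        rw [← weightedVar_smul, ← smul_eq_mul, ← dotProduct_smul]
        exact logPartition_le_dotProduct_add_weightedVar hx osc
    _ ≤ _ := by gcongr

end MulVec

section ZeroSumGame

open Matrix

variable {ι κ : Type*} [Fintype ι] [Fintype κ] {R : Matrix ι κ ℝ}

/-- The payoff vectors `(R y, -Rᵀ x)` that the two players of the zero-sum game `R` face under the
profile `(x, y)`; with this sign both players maximise. -/
noncomputable def payoffField (R : Matrix ι κ ℝ) : (ι → ℝ) × (κ → ℝ) →ₗ[ℝ] (ι → ℝ) × (κ → ℝ) :=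
  (R.mulVecLin ∘ₗ LinearMap.snd ℝ _ _).prod ((-Rᵀ).mulVecLin ∘ₗ LinearMap.fst ℝ _ _)

/-- The total gain of the two players of the zero-sum game `R` when, starting from the profile `p`,
the row player deviates to the pure strategy `i` and the column player to `j`. It is linear in `p`
because the payoffs before deviation cancel. -/
noncomputable def deviationGain (R : Matrix ι κ ℝ) (i : ι) (j : κ) :
    (ι → ℝ) × (κ → ℝ) →ₗ[ℝ] ℝ :=
  (LinearMap.proj (φ := fun _ : ι => ℝ) i ∘ₗ LinearMap.fst ℝ _ _
    + LinearMap.proj (φ := fun _ : κ => ℝ) j ∘ₗ LinearMap.snd ℝ _ _) ∘ₗ payoffField R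

/-- Nash equilibria of the zero-sum game `R`, in the form: no pair of pure deviations has positive
total gain. -/
def IsEquilibrium (R : Matrix ι κ ℝ) (p : (ι → ℝ) × (κ → ℝ)) : Prop :=
  p ∈ stdSimplex ℝ ι ×ˢ stdSimplex ℝ κ ∧ ∀ i j, deviationGain R i j p ≤ 0

lemma deviationGain_apply (R : Matrix ι κ ℝ) (i : ι) (j : κ) (p : (ι → ℝ) × (κ → ℝ)) :
    deviationGain R i j p = (payoffField R p).1 i + (payoffField R p).2 j := rfl

lemma payoffField_skew (R : Matrix ι κ ℝ) (p q : (ι → ℝ) × (κ → ℝ)) :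
    q.1 ⬝ᵥ (payoffField R p).1 + q.2 ⬝ᵥ (payoffField R p).2
      = -(p.1 ⬝ᵥ (payoffField R q).1 + p.2 ⬝ᵥ (payoffField R q).2) := by
  have transpose_pairing : ∀ (x : ι → ℝ) (y : κ → ℝ), y ⬝ᵥ (-Rᵀ) *ᵥ x = -(x ⬝ᵥ R *ᵥ y) :=
    fun x y => by rw [neg_mulVec, dotProduct_neg, mulVec_transpose, dotProduct_mulVec,
      dotProduct_comm]
  change q.1 ⬝ᵥ R *ᵥ p.2 + q.2 ⬝ᵥ (-Rᵀ) *ᵥ p.1 = -(p.1 ⬝ᵥ R *ᵥ q.2 + p.2 ⬝ᵥ (-Rᵀ) *ᵥ q.1)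
  rw [transpose_pairing, transpose_pairing]
  ring

lemma payoffField_dotProduct_self (R : Matrix ι κ ℝ) (p : (ι → ℝ) × (κ → ℝ)) :
    p.1 ⬝ᵥ (payoffField R p).1 + p.2 ⬝ᵥ (payoffField R p).2 = 0 := by
  linarith [payoffField_skew R p p]

lemma dotProduct_add_dotProduct_le {x u : ι → ℝ} {y v : κ → ℝ} (hx : x ∈ stdSimplex ℝ ι)
    (hy : y ∈ stdSimplex ℝ κ) {c : ℝ} (h : ∀ i j, u i + v j ≤ c) : x ⬝ᵥ u + y ⬝ᵥ v ≤ c := by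
  have row : ∀ j, x ⬝ᵥ u ≤ c - v j := fun j =>
    dotProduct_le_of_mem_stdSimplex hx fun i => by linarith [h i j]
  have := dotProduct_le_of_mem_stdSimplex hy (c := c - x ⬝ᵥ u) (u := v)
    fun j => by linarith [row j]
  linarith

lemma IsEquilibrium.dotProduct_payoffField_nonneg {z p : (ι → ℝ) × (κ → ℝ)}
    (hz : IsEquilibrium R z) (hp : p ∈ stdSimplex ℝ ι ×ˢ stdSimplex ℝ κ) :
    0 ≤ z.1 ⬝ᵥ (payoffField R p).1 + z.2 ⬝ᵥ (payoffField R p).2 := by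
  rw [payoffField_skew, neg_nonneg]
  exact dotProduct_add_dotProduct_le hp.1 hp.2 hz.2

/-- The cone of feasible directions of the profile space at the profile `z`. -/
def profileTangentCone (z : (ι → ℝ) × (κ → ℝ)) : PointedCone ℝ ((ι → ℝ) × (κ → ℝ)) :=
  (simplexTangentCone z.1).prod (simplexTangentCone z.2)

lemma isClosed_profileTangentCone (z : (ι → ℝ) × (κ → ℝ)) :
    IsClosed (profileTangentCone z : Set ((ι → ℝ) × (κ → ℝ))) :=
  (isClosed_simplexTangentCone z.1).prod (isClosed_simplexTangentCone z.2)

lemma sub_mem_profileTangentCone {z p : (ι → ℝ) × (κ → ℝ)}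
    (hz : z ∈ stdSimplex ℝ ι ×ˢ stdSimplex ℝ κ) (hp : p ∈ stdSimplex ℝ ι ×ˢ stdSimplex ℝ κ) :
    p - z ∈ profileTangentCone z :=
  ⟨sub_mem_simplexTangentCone hz.1 hp.1, sub_mem_simplexTangentCone hz.2 hp.2⟩

-- Otherwise a short move from `z` in the direction `d` would give a second equilibrium.
lemma eq_zero_of_deviationGain_nonpos {z d : (ι → ℝ) × (κ → ℝ)} (hz : IsEquilibrium R z)
    (huniq : ∀ q, IsEquilibrium R q → q = z) (hd : d ∈ profileTangentCone z)
    (hgain : ∀ i j, deviationGain R i j z = 0 → deviationGain R i j d ≤ 0) : d = 0 := by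
  have gain_nonpos : ∀ᶠ ε in nhdsWithin (0 : ℝ) (Set.Ioi 0),
      ∀ i j, 0 ≤ -deviationGain R i j z + ε * -deviationGain R i j d :=
    eventually_all.2 fun i => eventually_all.2 fun j =>
      eventually_nonneg_add_mul (neg_nonneg.2 (hz.2 i j))
        fun h => neg_nonneg.2 (hgain i j (neg_eq_zero.1 h))
  obtain ⟨ε, hε, hx, hy, hgain⟩ := (eventually_mem_nhdsWithin.and
    ((eventually_add_smul_mem_stdSimplex hz.1.1 hd.1).and
      ((eventually_add_smul_mem_stdSimplex hz.1.2 hd.2).and gain_nonpos))).exists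
  have : z + ε • d = z := huniq _ ⟨⟨hx, hy⟩, fun i j => by
    rw [map_add, map_smul, smul_eq_mul]
    linarith [hgain i j]⟩
  exact (smul_eq_zero.1 (add_eq_left.1 this)).resolve_left (ne_of_gt hε)

lemma exists_norm_le_mul_of_deviationGain_le {z : (ι → ℝ) × (κ → ℝ)} (hz : IsEquilibrium R z)
    (huniq : ∀ q, IsEquilibrium R q → q = z) :
    ∃ C, ∀ d ∈ profileTangentCone z, ∀ ε, 0 ≤ ε →
      (∀ i j, deviationGain R i j z = 0 → deviationGain R i j d ≤ ε) → ‖d‖ ≤ C * ε := by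
  obtain ⟨C, hC⟩ := exists_norm_le_mul_of_forall_le (profileTangentCone z)
    (isClosed_profileTangentCone z)
    (fun a : {a : ι × κ // deviationGain R a.1 a.2 z = 0} => deviationGain R a.1.1 a.1.2)
    fun d hd hgain => eq_zero_of_deviationGain_nonpos hz huniq hd fun i j hij => hgain ⟨(i, j), hij⟩
  exact ⟨C, fun d hd ε hε hgain => hC d hd ε hε fun a => hgain _ _ a.2⟩

end ZeroSumGame

section ProfileTilt

variable {ι κ : Type*} [Fintype ι] [Fintype κ] {p : (ι → ℝ) × (κ → ℝ)}

/-- Simultaneous multiplicative-weights updates of the two strategies of a profile. -/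
noncomputable def profileTilt (p u : (ι → ℝ) × (κ → ℝ)) : (ι → ℝ) × (κ → ℝ) :=
  (expTilt p.1 u.1, expTilt p.2 u.2)

/-- The sum of the two log-partition functions of a profile; it serves as the potential of the
dynamics. -/
noncomputable def profileLogPartition (p u : (ι → ℝ) × (κ → ℝ)) : ℝ :=
  logPartition p.1 u.1 + logPartition p.2 u.2

/-- The sum of the variances of the payoff vectors `u` under the two strategies of a profile. -/
def profileVar (p u : (ι → ℝ) × (κ → ℝ)) : ℝ := weightedVar p.1 u.1 + weightedVar p.2 u.2

lemma openSimplex_prod_subset_stdSimplex_prod :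
    openSimplex ι ×ˢ openSimplex κ ⊆ stdSimplex ℝ ι ×ˢ stdSimplex ℝ κ :=
  Set.prod_mono openSimplex_subset_stdSimplex openSimplex_subset_stdSimplex

lemma profileTilt_mem_openSimplex (hp : p ∈ openSimplex ι ×ˢ openSimplex κ)
    (u : (ι → ℝ) × (κ → ℝ)) : profileTilt p u ∈ openSimplex ι ×ˢ openSimplex κ :=
  ⟨expTilt_mem_openSimplex hp.1 u.1, expTilt_mem_openSimplex hp.2 u.2⟩

lemma profileTilt_zero (hp : p ∈ openSimplex ι ×ˢ openSimplex κ) : profileTilt p 0 = p :=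
  Prod.ext (expTilt_zero hp.1) (expTilt_zero hp.2)

lemma profileTilt_add (hp : p ∈ openSimplex ι ×ˢ openSimplex κ) (u v : (ι → ℝ) × (κ → ℝ)) :
    profileTilt p (u + v) = profileTilt (profileTilt p u) v :=
  Prod.ext (expTilt_add hp.1 u.1 v.1) (expTilt_add hp.2 u.2 v.2)

lemma profileLogPartition_zero (hp : p ∈ openSimplex ι ×ˢ openSimplex κ) :
    profileLogPartition p 0 = 0 := by
  simp [profileLogPartition, logPartition_zero hp.1, logPartition_zero hp.2]

lemma profileLogPartition_add (hp : p ∈ openSimplex ι ×ˢ openSimplex κ)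
    (u v : (ι → ℝ) × (κ → ℝ)) :
    profileLogPartition p (u + v)
      = profileLogPartition p u + profileLogPartition (profileTilt p u) v := by
  simp only [profileLogPartition, profileTilt, Prod.fst_add, Prod.snd_add, logPartition_add hp.1,
    logPartition_add hp.2]
  ring

lemma profileVar_nonneg (hp : p ∈ stdSimplex ℝ ι ×ˢ stdSimplex ℝ κ) (u : (ι → ℝ) × (κ → ℝ)) :
    0 ≤ profileVar p u :=
  add_nonneg (weightedVar_nonneg hp.1 u.1) (weightedVar_nonneg hp.2 u.2)

lemma continuous_profileVar :
    Continuous fun p : ((ι → ℝ) × (κ → ℝ)) × ((ι → ℝ) × (κ → ℝ)) => profileVar p.1 p.2 :=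
  (continuous_weightedVar.comp ((continuous_fst.comp continuous_fst).prodMk
    (continuous_fst.comp continuous_snd))).add
  (continuous_weightedVar.comp ((continuous_snd.comp continuous_fst).prodMk
    (continuous_snd.comp continuous_snd)))

end ProfileTilt

section Dynamics

open Matrix

variable {ι κ : Type*} [Fintype ι] [Fintype κ] {R : Matrix ι κ ℝ} {η ξ : ℝ}
  {p z : (ι → ℝ) × (κ → ℝ)}

/-- The intermediate profile `(x̂, ŷ)` of an FLBR-MWU step. -/
noncomputable def flbrLookahead (ξ : ℝ) (R : Matrix ι κ ℝ) (p : (ι → ℝ) × (κ → ℝ)) :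
    (ι → ℝ) × (κ → ℝ) :=
  profileTilt p (ξ • payoffField R p)

/-- The FLBR-MWU step, for a payoff matrix of any shape. -/
noncomputable def flbrMap (η ξ : ℝ) (R : Matrix ι κ ℝ) (p : (ι → ℝ) × (κ → ℝ)) :
    (ι → ℝ) × (κ → ℝ) :=
  profileTilt p (η • payoffField R (flbrLookahead ξ R p))

/-- The sum of the intermediate profiles of the first `T` steps from `p`. -/
noncomputable def cumulativeLookahead (η ξ : ℝ) (R : Matrix ι κ ℝ) (p : (ι → ℝ) × (κ → ℝ))
    (T : ℕ) : (ι → ℝ) × (κ → ℝ) :=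
  ∑ t ∈ Finset.range T, flbrLookahead ξ R ((flbrMap η ξ R)^[t] p)

lemma flbrLookahead_mem_openSimplex (hp : p ∈ openSimplex ι ×ˢ openSimplex κ) :
    flbrLookahead ξ R p ∈ openSimplex ι ×ˢ openSimplex κ :=
  profileTilt_mem_openSimplex hp _

lemma iterate_flbrMap_mem_openSimplex (hp : p ∈ openSimplex ι ×ˢ openSimplex κ) (t : ℕ) :
    (flbrMap η ξ R)^[t] p ∈ openSimplex ι ×ˢ openSimplex κ := by
  induction t with
  | zero => exact hp
  | succ t ih =>
    rw [Function.iterate_succ_apply']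
    exact profileTilt_mem_openSimplex ih _

lemma smul_payoffField_cumulativeLookahead_succ (η ξ : ℝ) (R : Matrix ι κ ℝ)
    (p : (ι → ℝ) × (κ → ℝ)) (T : ℕ) :
    η • payoffField R (cumulativeLookahead η ξ R p (T + 1))
      = η • payoffField R (cumulativeLookahead η ξ R p T)
        + η • payoffField R (flbrLookahead ξ R ((flbrMap η ξ R)^[T] p)) := by
  rw [cumulativeLookahead, Finset.sum_range_succ, map_add, smul_add, ← cumulativeLookahead]

lemma iterate_flbrMap_eq_profileTilt (hp : p ∈ openSimplex ι ×ˢ openSimplex κ) (T : ℕ) :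
    (flbrMap η ξ R)^[T] p
      = profileTilt p (η • payoffField R (cumulativeLookahead η ξ R p T)) := by
  induction T with
  | zero => simp [cumulativeLookahead, profileTilt_zero hp]
  | succ T ih =>
    rw [smul_payoffField_cumulativeLookahead_succ, profileTilt_add hp, ← ih,
      Function.iterate_succ_apply', flbrMap]

lemma sum_profileLogPartition_iterate_flbrMap (hp : p ∈ openSimplex ι ×ˢ openSimplex κ) (T : ℕ) :
    ∑ t ∈ Finset.range T, profileLogPartition ((flbrMap η ξ R)^[t] p)
        (η • payoffField R (flbrLookahead ξ R ((flbrMap η ξ R)^[t] p)))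
      = profileLogPartition p (η • payoffField R (cumulativeLookahead η ξ R p T)) := by
  induction T with
  | zero => simp [cumulativeLookahead, profileLogPartition_zero hp]
  | succ T ih =>
    rw [smul_payoffField_cumulativeLookahead_succ, profileLogPartition_add hp,
      ← iterate_flbrMap_eq_profileTilt hp, Finset.sum_range_succ, ih]

lemma IsEquilibrium.dotProduct_payoffField_cumulativeLookahead_nonneg (hz : IsEquilibrium R z)
    (hp : p ∈ openSimplex ι ×ˢ openSimplex κ) (T : ℕ) :
    0 ≤ z.1 ⬝ᵥ (payoffField R (cumulativeLookahead η ξ R p T)).1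
      + z.2 ⬝ᵥ (payoffField R (cumulativeLookahead η ξ R p T)).2 := by
  rw [cumulativeLookahead, map_sum, Prod.fst_sum, Prod.snd_sum, dotProduct_sum, dotProduct_sum,
    ← Finset.sum_add_distrib]
  exact Finset.sum_nonneg fun t _ => hz.dotProduct_payoffField_nonneg
    (openSimplex_prod_subset_stdSimplex_prod
      (flbrLookahead_mem_openSimplex (iterate_flbrMap_mem_openSimplex hp t)))

lemma cumulativeLookahead_sub_smul_mem_profileTangentCone
    (hz : z ∈ stdSimplex ℝ ι ×ˢ stdSimplex ℝ κ) (hp : p ∈ openSimplex ι ×ˢ openSimplex κ) (T : ℕ) :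
    cumulativeLookahead η ξ R p T - (T : ℝ) • z ∈ profileTangentCone z := by
  have : cumulativeLookahead η ξ R p T - (T : ℝ) • z
      = ∑ t ∈ Finset.range T, (flbrLookahead ξ R ((flbrMap η ξ R)^[t] p) - z) := by
    rw [Finset.sum_sub_distrib, Finset.sum_const, Finset.card_range, cumulativeLookahead,
      Nat.cast_smul_eq_nsmul]
  rw [this]
  exact sum_mem fun t _ => sub_mem_profileTangentCone hz (openSimplex_prod_subset_stdSimplex_prod
    (flbrLookahead_mem_openSimplex (iterate_flbrMap_mem_openSimplex hp t)))

lemma eq_of_profileVar_eq_zero {q : (ι → ℝ) × (κ → ℝ)} (hz : IsEquilibrium R z)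
    (huniq : ∀ q, IsEquilibrium R q → q = z) (hq : q ∈ stdSimplex ℝ ι ×ˢ stdSimplex ℝ κ)
    (hvar : profileVar q (payoffField R q) = 0)
    (hpos : ∀ i j, deviationGain R i j z = 0 → 0 < q.1 i ∧ 0 < q.2 j) : q = z := by
  obtain ⟨row_var, col_var⟩ := (add_eq_zero_iff_of_nonneg
    (weightedVar_nonneg hq.1 (payoffField R q).1) (weightedVar_nonneg hq.2 (payoffField R q).2)).1
    hvar
  refine sub_eq_zero.1 (eq_zero_of_deviationGain_nonpos hz huniq
    (sub_mem_profileTangentCone hz.1 hq) fun i j hij => le_of_eq ?_)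
  rw [map_sub, hij, sub_zero, deviationGain_apply,
    eq_dotProduct_of_weightedVar_eq_zero hq.1 row_var (hpos i j hij).1,
    eq_dotProduct_of_weightedVar_eq_zero hq.2 col_var (hpos i j hij).2,
    payoffField_dotProduct_self]

section Convergence

variable (hcol : ∀ i k j, R i j - R k j ≤ 1) (hrow : ∀ i j l, R i j - R i l ≤ 1) (hη : 0 < η)
  (hη' : η ≤ 1 / 12) (hξ : 1 ≤ ξ) (hηξ : η * ξ ≤ 1) (hp : p ∈ openSimplex ι ×ˢ openSimplex κ)

include hcol hrow hη hη' hξ hηξ hp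

lemma profileLogPartition_flbrLookahead_le :
    profileLogPartition p (η • payoffField R (flbrLookahead ξ R p))
      ≤ -(η ^ 2 * profileVar p (payoffField R p)) := by
  have hrow' : ∀ j l i, -R i j - -R i l ≤ 1 := fun j l i => by linarith [hrow i l j]
  have hp' := openSimplex_prod_subset_stdSimplex_prod hp
  set q := flbrLookahead ξ R p
  have hq : q ∈ stdSimplex ℝ ι ×ˢ stdSimplex ℝ κ :=
    openSimplex_prod_subset_stdSimplex_prod (flbrLookahead_mem_openSimplex hp)
  have row : logPartition p.1 (η • payoffField R q).1 ≤ η * (p.1 ⬝ᵥ (payoffField R q).1)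
      + η ^ 2 * (2 * weightedVar p.1 (payoffField R p).1 + (∑ j, |q.2 j - p.2 j|) ^ 2 / 2) :=
    logPartition_smul_mulVec_le hcol hp.1 hq.2 p.2 hη.le (by linarith)
  have col : logPartition p.2 (η • payoffField R q).2 ≤ η * (p.2 ⬝ᵥ (payoffField R q).2)
      + η ^ 2 * (2 * weightedVar p.2 (payoffField R p).2 + (∑ i, |q.1 i - p.1 i|) ^ 2 / 2) :=
    logPartition_smul_mulVec_le hrow' hp.2 hq.1 p.1 hη.le (by linarith)
  have row_gain : η ^ 2 * (3 * weightedVar p.1 (payoffField R p).1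
      + (∑ i, |q.1 i - p.1 i|) ^ 2 / 2) ≤ η * ((payoffField R p).1 ⬝ᵥ (q.1 - p.1)) :=
    sq_mul_three_mul_weightedVar_add_le hp.1
      (mulVec_sub_mulVec_le_of_mem_stdSimplex hcol hp'.2) hη hη' hξ hηξ
  have col_gain : η ^ 2 * (3 * weightedVar p.2 (payoffField R p).2
      + (∑ j, |q.2 j - p.2 j|) ^ 2 / 2) ≤ η * ((payoffField R p).2 ⬝ᵥ (q.2 - p.2)) :=
    sq_mul_three_mul_weightedVar_add_le hp.2
      (mulVec_sub_mulVec_le_of_mem_stdSimplex hrow' hp'.1) hη hη' hξ hηξ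
  have linear_terms : p.1 ⬝ᵥ (payoffField R q).1 + p.2 ⬝ᵥ (payoffField R q).2
      = -((payoffField R p).1 ⬝ᵥ (q.1 - p.1) + (payoffField R p).2 ⬝ᵥ (q.2 - p.2)) := by
    rw [dotProduct_sub, dotProduct_sub, dotProduct_comm _ q.1, dotProduct_comm _ p.1,
      dotProduct_comm _ q.2, dotProduct_comm _ p.2]
    linarith [payoffField_skew R q p, payoffField_dotProduct_self R p]
  rw [profileLogPartition, profileVar]
  linear_combination row + col + row_gain + col_gain + η * linear_terms

lemma exists_deviationGain_cumulativeLookahead_add_sum_le :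
    ∃ L, 0 ≤ L ∧ ∀ T i j, η * deviationGain R i j (cumulativeLookahead η ξ R p T)
      + η ^ 2 * ∑ t ∈ Finset.range T,
          profileVar ((flbrMap η ξ R)^[t] p) (payoffField R ((flbrMap η ξ R)^[t] p)) ≤ L := by
  obtain ⟨L, hL⟩ := (Set.finite_range fun a : ι × κ => -(log (p.1 a.1) + log (p.2 a.2))).bddAbove
  refine ⟨max L 0, le_max_right _ _, fun T i j => le_max_of_le_left ?_⟩
  have potential_le : profileLogPartition p (η • payoffField R (cumulativeLookahead η ξ R p T))
      ≤ -(η ^ 2 * ∑ t ∈ Finset.range T,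
          profileVar ((flbrMap η ξ R)^[t] p) (payoffField R ((flbrMap η ξ R)^[t] p))) := by
    rw [← sum_profileLogPartition_iterate_flbrMap hp, Finset.mul_sum, ← Finset.sum_neg_distrib]
    exact Finset.sum_le_sum fun t _ => profileLogPartition_flbrLookahead_le hcol hrow hη hη' hξ hηξ
      (iterate_flbrMap_mem_openSimplex hp t)
  have row := log_add_le_logPartition hp.1
    (η • payoffField R (cumulativeLookahead η ξ R p T)).1 i
  have col := log_add_le_logPartition hp.2
    (η • payoffField R (cumulativeLookahead η ξ R p T)).2 j
  have hLij : -(log (p.1 i) + log (p.2 j)) ≤ L := hL ⟨(i, j), rfl⟩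
  simp only [profileLogPartition, Prod.smul_fst, Prod.smul_snd, Pi.smul_apply, smul_eq_mul]
    at potential_le row col
  rw [deviationGain_apply]
  linarith

lemma tendsto_profileVar_iterate_flbrMap (hz : IsEquilibrium R z) :
    Tendsto (fun t => profileVar ((flbrMap η ξ R)^[t] p) (payoffField R ((flbrMap η ξ R)^[t] p)))
      atTop (nhds 0) := by
  obtain ⟨L, -, hL⟩ :=
    exists_deviationGain_cumulativeLookahead_add_sum_le hcol hrow hη hη' hξ hηξ hp
  have sum_le : ∀ T, ∑ t ∈ Finset.range T,
      profileVar ((flbrMap η ξ R)^[t] p) (payoffField R ((flbrMap η ξ R)^[t] p)) ≤ L / η ^ 2 := by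
    intro T
    rw [le_div_iff₀' (by positivity)]
    set S := payoffField R (cumulativeLookahead η ξ R p T)
    set V := ∑ t ∈ Finset.range T,
      profileVar ((flbrMap η ξ R)^[t] p) (payoffField R ((flbrMap η ξ R)^[t] p))
    have average : z.1 ⬝ᵥ S.1 + z.2 ⬝ᵥ S.2 ≤ (L - η ^ 2 * V) / η :=
      dotProduct_add_dotProduct_le hz.1.1 hz.1.2 fun i j => by
        rw [le_div_iff₀' hη, ← deviationGain_apply]
        linarith [hL T i j]
    have := (hz.dotProduct_payoffField_cumulativeLookahead_nonneg hp T).trans average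
    rw [le_div_iff₀ hη] at this
    linarith
  exact (summable_of_sum_range_le (fun t => profileVar_nonneg
    (openSimplex_prod_subset_stdSimplex_prod (iterate_flbrMap_mem_openSimplex hp t)) _)
    sum_le).tendsto_atTop_zero

lemma exists_norm_cumulativeLookahead_sub_smul_le (hz : IsEquilibrium R z)
    (huniq : ∀ q, IsEquilibrium R q → q = z) :
    ∃ B, ∀ T : ℕ, ‖cumulativeLookahead η ξ R p T - (T : ℝ) • z‖ ≤ B := by
  obtain ⟨L, hL0, hL⟩ :=
    exists_deviationGain_cumulativeLookahead_add_sum_le hcol hrow hη hη' hξ hηξ hp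
  obtain ⟨C, hC⟩ := exists_norm_le_mul_of_deviationGain_le hz huniq
  refine ⟨C * (L / η), fun T => hC _
    (cumulativeLookahead_sub_smul_mem_profileTangentCone hz.1 hp T) _ (by positivity)
    fun i j hij => ?_⟩
  have : 0 ≤ ∑ t ∈ Finset.range T,
      profileVar ((flbrMap η ξ R)^[t] p) (payoffField R ((flbrMap η ξ R)^[t] p)) :=
    Finset.sum_nonneg fun t _ => profileVar_nonneg
      (openSimplex_prod_subset_stdSimplex_prod (iterate_flbrMap_mem_openSimplex hp t)) _
  rw [map_sub, map_smul, hij, smul_zero, sub_zero, le_div_iff₀' hη]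
  linarith [hL T i j, mul_nonneg (sq_nonneg η) this]

lemma exists_pos_forall_le_iterate_flbrMap (hz : IsEquilibrium R z)
    (huniq : ∀ q, IsEquilibrium R q → q = z) {i : ι} {j : κ}
    (hij : deviationGain R i j z = 0) :
    ∃ c > 0, ∀ t, c ≤ ((flbrMap η ξ R)^[t] p).1 i ∧ c ≤ ((flbrMap η ξ R)^[t] p).2 j := by
  obtain ⟨B, hB⟩ :=
    exists_norm_cumulativeLookahead_sub_smul_le hcol hrow hη hη' hξ hηξ hp hz huniq
  obtain ⟨M, hM, hFM⟩ := (payoffField R).toContinuousLinearMap.bound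
  set D : ℕ → (ι → ℝ) × (κ → ℝ) :=
    fun T => η • payoffField R (cumulativeLookahead η ξ R p T - (T : ℝ) • z)
  have hD : ∀ T, ‖D T‖ ≤ η * (M * B) := fun T => by
    rw [norm_smul, norm_of_nonneg hη.le]
    exact mul_le_mul_of_nonneg_left
      ((hFM _).trans (mul_le_mul_of_nonneg_left (hB T) hM.le)) hη.le
  have payoff_eq : ∀ T : ℕ, η • payoffField R (cumulativeLookahead η ξ R p T)
      = (η * T) • payoffField R z + D T := fun T => by
    simp only [D, map_sub, map_smul]
    module
  have row_max : ∀ k, (payoffField R z).1 k ≤ (payoffField R z).1 i := fun k => by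
    linarith [hz.2 k j, deviationGain_apply R k j z, deviationGain_apply R i j z]
  have col_max : ∀ l, (payoffField R z).2 l ≤ (payoffField R z).2 j := fun l => by
    linarith [hz.2 i l, deviationGain_apply R i l z, deviationGain_apply R i j z]
  refine ⟨min (p.1 i) (p.2 j) * exp (-(2 * (η * (M * B)))),
    mul_pos (lt_min (hp.1.1 i) (hp.2.1 j)) (exp_pos _), fun T => ?_⟩
  rw [iterate_flbrMap_eq_profileTilt hp, payoff_eq]
  exact ⟨(mul_le_mul_of_nonneg_right (min_le_left _ _) (exp_pos _).le).trans
      (mul_exp_neg_le_expTilt_smul_add hp.1 (by positivity)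
        ((norm_fst_le _).trans (hD T)) row_max),
    (mul_le_mul_of_nonneg_right (min_le_right _ _) (exp_pos _).le).trans
      (mul_exp_neg_le_expTilt_smul_add hp.2 (by positivity)
        ((norm_snd_le _).trans (hD T)) col_max)⟩

end Convergence

theorem flbr_mwu_last_iterate_convergence_general (hcol : ∀ i k j, R i j - R k j ≤ 1)
    (hrow : ∀ i j l, R i j - R i l ≤ 1) (hz : IsEquilibrium R z)
    (huniq : ∀ q, IsEquilibrium R q → q = z) (hη : 0 < η) (hη' : η ≤ 1 / 12) (hξ : 1 ≤ ξ)
    (hηξ : η * ξ ≤ 1) (hp : p ∈ openSimplex ι ×ˢ openSimplex κ) :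
    Tendsto (fun t => (flbrMap η ξ R)^[t] p) atTop (nhds z) := by
  have iterate_mem : ∀ t, (flbrMap η ξ R)^[t] p ∈ stdSimplex ℝ ι ×ˢ stdSimplex ℝ κ :=
    fun t => openSimplex_prod_subset_stdSimplex_prod (iterate_flbrMap_mem_openSimplex hp t)
  refine ((isCompact_stdSimplex ℝ ι).prod
    (isCompact_stdSimplex ℝ κ)).tendsto_nhds_of_unique_mapClusterPt
    (Eventually.of_forall iterate_mem) fun q hq hcluster => ?_
  obtain ⟨φ, hφ, hlim⟩ := hcluster.tendsto_subseq
  refine eq_of_profileVar_eq_zero hz huniq hq ?_ fun i j hij => ?_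
  · have hcont : Continuous fun q => profileVar q (payoffField R q) :=
      continuous_profileVar.comp
        (continuous_id.prodMk (payoffField R).continuous_of_finiteDimensional)
    exact tendsto_nhds_unique ((hcont.tendsto q).comp hlim)
      ((tendsto_profileVar_iterate_flbrMap hcol hrow hη hη' hξ hηξ hp hz).comp hφ.tendsto_atTop)
  · obtain ⟨c, hc, hbound⟩ :=
      exists_pos_forall_le_iterate_flbrMap hcol hrow hη hη' hξ hηξ hp hz huniq hij
    exact ⟨hc.trans_le (ge_of_tendsto' (((continuous_apply i).comp continuous_fst).tendsto q
        |>.comp hlim) fun k => (hbound (φ k)).1),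
      hc.trans_le (ge_of_tendsto' (((continuous_apply j).comp continuous_snd).tendsto q
        |>.comp hlim) fun k => (hbound (φ k)).2)⟩

end Dynamics

section SquareGame

open Matrix

variable {n : ℕ} {R : Matrix (Fin n) (Fin n) ℝ}

lemma payoff_eq_dotProduct_rowPayoff (R : Matrix (Fin n) (Fin n) ℝ) (x y : Fin n → ℝ) :
    payoff R x y = x ⬝ᵥ rowPayoff R y := by
  simp only [payoff, dotProduct, rowPayoff, Finset.mul_sum, mul_assoc]

lemma payoff_eq_dotProduct_colPayoff (R : Matrix (Fin n) (Fin n) ℝ) (x y : Fin n → ℝ) :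
    payoff R x y = y ⬝ᵥ colPayoff R x :=
  (payoff_eq_dotProduct_rowPayoff R x y).trans
    ((dotProduct_mulVec x R y).trans (dotProduct_comm _ _))

lemma payoffField_snd_apply (R : Matrix (Fin n) (Fin n) ℝ) (p : (Fin n → ℝ) × (Fin n → ℝ))
    (j : Fin n) : (payoffField R p).2 j = -colPayoff R p.1 j := by
  change ((-Rᵀ) *ᵥ p.1) j = -(p.1 ᵥ* R) j
  rw [neg_mulVec, mulVec_transpose, Pi.neg_apply]

lemma deviationGain_eq_rowPayoff_sub_colPayoff (R : Matrix (Fin n) (Fin n) ℝ) (i j : Fin n)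
    (p : (Fin n → ℝ) × (Fin n → ℝ)) :
    deviationGain R i j p = rowPayoff R p.2 i - colPayoff R p.1 j := by
  rw [deviationGain_apply, payoffField_snd_apply, sub_eq_add_neg]
  rfl

lemma isNash_iff_isEquilibrium {x y : Fin n → ℝ} : IsNash R x y ↔ IsEquilibrium R (x, y) := by
  simp only [IsEquilibrium, deviationGain_eq_rowPayoff_sub_colPayoff, sub_nonpos]
  constructor
  · rintro ⟨hx, hy, row, col⟩
    exact ⟨⟨hx, hy⟩, fun i j => (row i).trans (col j)⟩
  · rintro ⟨⟨hx, hy⟩, h⟩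
    refine ⟨hx, hy, fun i => ?_, fun j => ?_⟩
    · have := dotProduct_le_of_mem_stdSimplex hy (u := -colPayoff R x) fun j => neg_le_neg (h i j)
      rw [dotProduct_neg] at this
      linarith [payoff_eq_dotProduct_colPayoff R x y]
    · rw [payoff_eq_dotProduct_rowPayoff]
      exact dotProduct_le_of_mem_stdSimplex hx fun i => h i j

lemma flbrStep_eq_flbrMap (η ξ : ℝ) (R : Matrix (Fin n) (Fin n) ℝ) :
    flbrStep η ξ R = flbrMap η ξ R := by
  funext p
  have col_tilt : ∀ (a : ℝ) (x y z : Fin n → ℝ),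
      mwuY a R y x = expTilt y (a • (payoffField R (x, z)).2) := fun a x y z => by
    funext j
    simp only [mwuY, expTilt, Pi.smul_apply, smul_eq_mul, payoffField_snd_apply, mul_neg]
  have lookahead : flbrLookahead ξ R p = (brX ξ R p.1 p.2, brY ξ R p.1 p.2) :=
    Prod.ext rfl (col_tilt ξ p.1 p.2 p.2).symm
  rw [flbrMap, lookahead]
  exact Prod.ext rfl (col_tilt η _ p.2 _)

lemma const_inv_mem_openSimplex (hn : n ≠ 0) : (fun _ => (n : ℝ)⁻¹) ∈ openSimplex (Fin n) :=
  ⟨fun _ => by positivity, by simp [hn]⟩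

end SquareGame

/-- For a zero-sum game with payoff matrix `R` having all entries in `(0,1]`
and a unique Nash equilibrium `(xs, ys)`, there is `η₀ ∈ (0,1)` such that for every
`η ∈ (0,η₀)` there is `ξ₀ ∈ (0, 1/η)` such that for every `ξ ∈ [ξ₀, 1/η)` (so `ηξ < 1`),
the FLBR-MWU iterates started from the uniform profile converge to `(xs, ys)`. -/
theorem flbr_mwu_last_iterate_convergence {n : ℕ} (R : Matrix (Fin n) (Fin n) ℝ)
    (hR : ∀ i j, 0 < R i j ∧ R i j ≤ 1)
    (xs ys : Fin n → ℝ) (hNash : IsNash R xs ys)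
    (huniq : ∀ x y, IsNash R x y → x = xs ∧ y = ys) :
    ∃ η₀ ∈ Set.Ioo (0 : ℝ) 1, ∀ η ∈ Set.Ioo (0 : ℝ) η₀, ∃ ξ₀ ∈ Set.Ioo (0 : ℝ) (1 / η),
      ∀ ξ ∈ Set.Ico ξ₀ (1 / η),
        Filter.Tendsto
          (fun t : ℕ => (flbrStep η ξ R)^[t] (fun _ : Fin n => (n : ℝ)⁻¹, fun _ : Fin n => (n : ℝ)⁻¹))
          Filter.atTop (nhds (xs, ys)) := by
  have spread : ∀ i j k l, R i j - R k l ≤ 1 := fun i j k l => by linarith [hR i j, hR k l]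
  have equilibrium_unique : ∀ q, IsEquilibrium R q → q = (xs, ys) := fun q hq =>
    Prod.ext_iff.2 (huniq q.1 q.2 (isNash_iff_isEquilibrium.2 hq))
  have : Nonempty (Fin n) := nonempty_of_mem_stdSimplex hNash.1
  have uniform_mem := const_inv_mem_openSimplex (Fin.pos_iff_nonempty.2 this).ne'
  refine ⟨1 / 12, by norm_num, fun η ⟨hη, hη'⟩ => ⟨1, ⟨one_pos, ?_⟩, fun ξ ⟨hξ, hξη⟩ => ?_⟩⟩
  · exact one_lt_one_div hη (by linarith)
  · rw [flbrStep_eq_flbrMap]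
    exact flbr_mwu_last_iterate_convergence_general (fun i k j => spread i j k j)
      (fun i j l => spread i j i l) (isNash_iff_isEquilibrium.1 hNash) equilibrium_unique hη hη'.le
      hξ (by linarith [(lt_div_iff₀' hη).1 hξη]) ⟨uniform_mem, uniform_mem⟩
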